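/- There is an absolute constant c > 0 such that for every finite set P of points in ℝ^2 and every finite set L of lines in ℝ^2, the number of incidences satisfies I(P,L) ≤ c·( (|P||L|)^{2/3} + |P| + |L| ). -/

import Mathlib

/-!
The proof is Székely's crossing-number argument, made self-contained for straight-line drawings.

* Vertical lines contribute at most `|P|` incidences, so all lines may be taken to be graphs
  `y = m x + b`. Join consecutive points of `P` on each line: the resulting drawing has
  `|E| ≥ I - |L|` edges, and a pair of lines produces at most one crossing.
* A straight-line drawing without crossings has at most `3 |V|` edges (`PlaneDrawing.card_le`).
  This is proved by charging rather than by Euler's formula. At most `|V|` edges are lowest at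
  their left endpoint and at most `|V|` are lowest at their right endpoint. If `e` is neither, let
  `f` be the edge just below `e` at its left endpoint; the leftmost vertex between `f` and `e`
  sees `e` vertically above it (`PlaneDrawing.exists_seesAbove`), and a vertex sees at most one
  edge.
* Deleting one edge per crossing gives `|E(S)| ≤ 3 |S| + |X(S)|` for the part of the drawing
  induced on any `S ⊆ P`. Averaging over random `S` with density `p` yields
  `p ^ 2 |E| ≤ 3 p |P| + p ^ 4 |X|` (`sampling_inequality`), and `p = 6 |P| / |E|` together with
  `|X| ≤ |L| ^ 2` gives `|E| ^ 3 ≤ 72 (|P| |L|) ^ 2` whenever `|E| > 6 |P|`.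
-/

open scoped Classical

noncomputable section

/-- A set `l ⊆ ℝ^2` is a line if it is the zero set of a nonzero affine-linear function. -/
def IsLineR (l : Set (Fin 2 → ℝ)) : Prop :=
  ∃ a b c : ℝ, (a ≠ 0 ∨ b ≠ 0) ∧ l = {x | a * x 0 + b * x 1 + c = 0}

/-- The number of incidences between a finite set of points `P` and a finite set of lines `L`. -/
def incidencesR (P : Finset (Fin 2 → ℝ)) (L : Finset (Set (Fin 2 → ℝ))) : ℕ :=
  ((P ×ˢ L).filter fun z => z.1 ∈ z.2).card

/-! ### Crossing-free straight-line drawings -/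

/-- A finite straight-line drawing without crossings and without vertical edges. The vertex set is
`V`, and the edge `e ∈ E` is the segment of the line `y = m e * x + b e` from its left endpoint
`l e` to its right endpoint `r e`. Distinct edges may meet only at endpoints, and no vertex lies in
the interior of an edge. -/
structure PlaneDrawing {ι : Type*} (V : Finset (ℝ × ℝ)) (E : Finset ι) (l r : ι → ℝ × ℝ)
    (m b : ι → ℝ) : Prop where
  left_mem : ∀ e ∈ E, l e ∈ V
  right_mem : ∀ e ∈ E, r e ∈ V
  lt : ∀ e ∈ E, (l e).1 < (r e).1
  left_on : ∀ e ∈ E, (l e).2 = m e * (l e).1 + b e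
  right_on : ∀ e ∈ E, (r e).2 = m e * (r e).1 + b e
  vertex_free : ∀ e ∈ E, ∀ w ∈ V, (l e).1 < w.1 → w.1 < (r e).1 → w.2 ≠ m e * w.1 + b e
  noncrossing : ∀ e ∈ E, ∀ f ∈ E, e ≠ f → ∀ x, (l e).1 < x → (l f).1 < x → x < (r e).1 →
    x < (r f).1 → m e * x + b e ≠ m f * x + b f

namespace PlaneDrawing

variable {ι : Type*} {V : Finset (ℝ × ℝ)} {E : Finset ι} {l r : ι → ℝ × ℝ} {m b : ι → ℝ}

/-- Two edges keep their vertical order on the closed interval over which both are defined. -/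
lemma order_preserved (G : PlaneDrawing V E l r m b) {e f : ι} (he : e ∈ E) (hf : f ∈ E)
    {x y : ℝ} (hex : (l e).1 ≤ x) (hfx : (l f).1 ≤ x) (hxe : x ≤ (r e).1) (hxf : x ≤ (r f).1)
    (hey : (l e).1 ≤ y) (hfy : (l f).1 ≤ y) (hye : y ≤ (r e).1) (hyf : y ≤ (r f).1)
    (h : m e * x + b e < m f * x + b f) : m e * y + b e ≤ m f * y + b f := by
  by_contra! hy
  have hne : e ≠ f := by rintro rfl; exact lt_irrefl _ h
  -- The two affine functions agree at the point dividing `[x, y]` in the ratio `c : d`.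
  obtain ⟨c, hc⟩ : ∃ c, c = m f * x + b f - (m e * x + b e) := ⟨_, rfl⟩
  obtain ⟨d, hd⟩ : ∃ d, d = m e * y + b e - (m f * y + b f) := ⟨_, rfl⟩
  have hc0 : 0 < c := by linarith
  have hd0 : 0 < d := by linarith
  have hcd : 0 < c + d := by linarith
  have hz : m e * ((d * x + c * y) / (c + d)) + b e = m f * ((d * x + c * y) / (c + d)) + b f := by
    field_simp
    rw [hc, hd]; ring
  have hxy : x ≠ y := by rintro rfl; linarith
  have hlo : ∀ a, a ≤ x → a ≤ y → a < (d * x + c * y) / (c + d) := by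
    intro a h1 h2
    rw [lt_div_iff₀ hcd]
    rcases lt_or_gt_of_ne hxy with h3 | h3
    · nlinarith [mul_pos hc0 (sub_pos.2 h3), mul_nonneg hcd.le (sub_nonneg.2 h1)]
    · nlinarith [mul_pos hd0 (sub_pos.2 h3), mul_nonneg hcd.le (sub_nonneg.2 h2)]
  have hhi : ∀ a, x ≤ a → y ≤ a → (d * x + c * y) / (c + d) < a := by
    intro a h1 h2
    rw [div_lt_iff₀ hcd]
    rcases lt_or_gt_of_ne hxy with h3 | h3
    · nlinarith [mul_pos hd0 (sub_pos.2 h3), mul_nonneg hcd.le (sub_nonneg.2 h2)]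
    · nlinarith [mul_pos hc0 (sub_pos.2 h3), mul_nonneg hcd.le (sub_nonneg.2 h1)]
  exact G.noncrossing e he f hf hne _ (hlo _ hex hey) (hlo _ hfx hfy) (hhi _ hxe hye)
    (hhi _ hxf hyf) hz

/-- The vertex `w` lies strictly below the interior of the edge `e` and sees it vertically. -/
def SeesAbove (E : Finset ι) (l r : ι → ℝ × ℝ) (m b : ι → ℝ) (w : ℝ × ℝ) (e : ι) : Prop :=
  (l e).1 < w.1 ∧ w.1 < (r e).1 ∧ w.2 < m e * w.1 + b e ∧
    ∀ h ∈ E, (l h).1 < w.1 → w.1 < (r h).1 → w.2 < m h * w.1 + b h →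
      m e * w.1 + b e ≤ m h * w.1 + b h

lemma SeesAbove.unique (G : PlaneDrawing V E l r m b) {e f : ι} (he : e ∈ E) (hf : f ∈ E)
    {w : ℝ × ℝ} (h1 : SeesAbove E l r m b w e) (h2 : SeesAbove E l r m b w f) : e = f := by
  by_contra hne
  obtain ⟨a1, a2, a3, a4⟩ := h1
  obtain ⟨b1, b2, b3, b4⟩ := h2
  exact G.noncrossing e he f hf hne w.1 a1 b1 a2 b2
    (le_antisymm (a4 f hf b1 b2 b3) (b4 e he a1 a2 a3))

/-- If `e` is the lowest edge at neither of its endpoints, then some vertex sees it from below.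
With `f` the edge just below `e` at the left endpoint, such a vertex is the leftmost one between
`f` and `e`. -/
lemma exists_seesAbove (G : PlaneDrawing V E l r m b) {e f₀ g : ι} (he : e ∈ E) (hf₀ : f₀ ∈ E)
    (hg : g ∈ E) (hlf₀ : l f₀ = l e) (hmf₀ : m f₀ < m e) (hrg : r g = r e) (hmg : m e < m g) :
    ∃ w ∈ V, SeesAbove E l r m b w e := by
  obtain ⟨f, hfF, hfmax⟩ := Finset.exists_max_image
    (E.filter fun f => l f = l e ∧ m f < m e) m ⟨f₀, by simp [hf₀, hlf₀, hmf₀]⟩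
  obtain ⟨hf, hlf, hmf⟩ : f ∈ E ∧ l f = l e ∧ m f < m e := by simpa using hfF
  have hel := G.left_on e he
  have her := G.right_on e he
  have hfl := G.left_on f hf
  have hfr := G.right_on f hf
  have hgl := G.left_on g hg
  have hgr := G.right_on g hg
  have helt := G.lt e he
  have hflt := G.lt f hf
  have hglt := G.lt g hg
  rw [hlf] at hfl hflt
  rw [hrg] at hgr hglt
  -- Right of their common left endpoint, `f` runs strictly below `e`.
  have hfe : ∀ x, (l e).1 < x → m f * x + b f < m e * x + b e := by
    intro x hx; nlinarith [mul_pos (sub_pos.2 hmf) (sub_pos.2 hx)]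
  have hge : ∀ x, x < (r e).1 → m g * x + b g < m e * x + b e := by
    intro x hx; nlinarith [mul_pos (sub_pos.2 hmg) (sub_pos.2 hx)]
  let C := V.filter fun w => (l e).1 < w.1 ∧ w.1 < (r e).1 ∧ w.1 ≤ (r f).1 ∧
    m f * w.1 + b f ≤ w.2 ∧ w.2 < m e * w.1 + b e
  have hC : C.Nonempty := by
    rcases lt_or_ge (r f).1 (r e).1 with h | h
    · refine ⟨r f, Finset.mem_filter.2 ⟨G.right_mem f hf, hflt, h, le_rfl, hfr.ge, ?_⟩⟩
      rw [hfr]; exact hfe _ hflt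
    · have hlg : (l e).1 < (l g).1 := by
        by_contra! hle
        have := G.order_preserved hf hg (x := (r e).1) (y := (l e).1) (by rw [hlf]; exact helt.le)
          hglt.le h (by rw [hrg]) (by rw [hlf]) hle hflt.le
          (by rw [hrg]; exact helt.le) (by have := hfe _ helt; linarith)
        have := hge _ helt
        linarith
      have hfg := G.order_preserved hf hg (x := (r e).1) (y := (l g).1)
        (by rw [hlf]; exact helt.le) hglt.le h (by rw [hrg]) (by rw [hlf]; exact hlg.le) le_rfl
        (hglt.le.trans h) (by rw [hrg]; exact hglt.le) (by have := hfe _ helt; linarith)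
      refine ⟨l g, Finset.mem_filter.2 ⟨G.left_mem g hg, hlg, hglt, hglt.le.trans h, ?_, ?_⟩⟩
      · rw [hgl]; exact hfg
      · rw [hgl]; exact hge _ hglt
  obtain ⟨w, hwC, hwmin⟩ := Finset.exists_min_image C Prod.fst hC
  obtain ⟨hwV, w1, w2, w3, w4, w5⟩ := Finset.mem_filter.1 hwC
  refine ⟨w, hwV, w1, w2, w5, ?_⟩
  intro h hh h1 h2 h3
  by_contra! h4
  have hhl := G.left_on h hh
  rcases lt_or_ge (l e).1 (l h).1 with hlh | hlh
  · -- A blocking edge starting right of `l e` starts at a vertex of `C` left of `w`.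
    have k1 := G.order_preserved hh he (x := w.1) (y := (l h).1) h1.le w1.le h2.le w2.le
      le_rfl hlh.le (h1.trans h2).le (h1.trans w2).le h4
    have k2 := G.order_preserved hf hh (x := w.1) (y := (l h).1) (by rw [hlf]; exact w1.le) h1.le
      w3 h2.le (by rw [hlf]; exact hlh.le) le_rfl (h1.le.trans w3) (h1.trans h2).le (by linarith)
    have k3 := G.vertex_free e he (l h) (G.left_mem h hh) hlh (h1.trans w2)
    have : l h ∈ C := Finset.mem_filter.2 ⟨G.left_mem h hh, hlh, h1.trans w2, h1.le.trans w3,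
      by linarith, lt_of_le_of_ne (by linarith) k3⟩
    have := hwmin _ this
    linarith
  · -- Otherwise it is squeezed between `f` and `e` at `l e`, hence passes through `l e`.
    have k1 := G.order_preserved hh he (x := w.1) (y := (l e).1) h1.le w1.le h2.le w2.le
      hlh le_rfl (w1.trans h2).le helt.le h4
    have k2 := G.order_preserved hf hh (x := w.1) (y := (l e).1) (by rw [hlf]; exact w1.le) h1.le
      w3 h2.le (by rw [hlf]) hlh hflt.le (w1.trans h2).le (by linarith)
    have k3 : (l e).2 = m h * (l e).1 + b h := by linarith
    rcases hlh.lt_or_eq with hlt | heq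
    · exact G.vertex_free h hh (l e) (G.left_mem e he) hlt (w1.trans h2) k3
    · have hle : l h = l e := Prod.ext heq (by rw [hhl, heq, k3])
      have hmh : m h < m e := by
        by_contra! hc
        nlinarith [mul_nonneg (sub_nonneg.2 hc) (sub_pos.2 w1).le]
      have := hfmax h (by simp [hh, hle, hmh])
      nlinarith [mul_nonneg (sub_nonneg.2 this) (sub_pos.2 w1).le]

/-- Each edge is lowest at its left endpoint, lowest at its right endpoint, or seen from below by
a vertex; each vertex accounts for at most one edge of each kind. -/
theorem card_le (G : PlaneDrawing V E l r m b) : E.card ≤ 3 * V.card := by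
  let A := E.filter fun e => ∀ f ∈ E, l f = l e → m e ≤ m f
  let B := E.filter fun e => ∀ f ∈ E, r f = r e → m f ≤ m e
  let D := E.filter fun e => ∃ w ∈ V, SeesAbove E l r m b w e
  have hA : A.card ≤ V.card := by
    refine Finset.card_le_card_of_injOn l
      (fun e he => G.left_mem e (Finset.mem_filter.1 he).1) ?_
    intro e he f hf hef
    obtain ⟨he, he'⟩ := Finset.mem_filter.1 he
    obtain ⟨hf, hf'⟩ := Finset.mem_filter.1 hf
    have hm : m e = m f := le_antisymm (he' f hf hef.symm) (hf' e he hef)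
    by_contra hne
    have h1 := G.lt e he
    have h2 := G.lt f hf
    have h3 := G.left_on e he
    have h4 := G.left_on f hf
    rw [← hef] at h2 h4
    obtain ⟨x, hx, hx'⟩ := exists_between (lt_min h1 h2)
    obtain ⟨hx1, hx2⟩ := lt_min_iff.1 hx'
    refine G.noncrossing e he f hf hne x hx (by rw [← hef]; exact hx) hx1 hx2 ?_
    rw [hm] at h3 ⊢
    linarith
  have hB : B.card ≤ V.card := by
    refine Finset.card_le_card_of_injOn r
      (fun e he => G.right_mem e (Finset.mem_filter.1 he).1) ?_
    intro e he f hf hef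
    obtain ⟨he, he'⟩ := Finset.mem_filter.1 he
    obtain ⟨hf, hf'⟩ := Finset.mem_filter.1 hf
    have hm : m e = m f := le_antisymm (hf' e he hef) (he' f hf hef.symm)
    by_contra hne
    have h1 := G.lt e he
    have h2 := G.lt f hf
    have h3 := G.right_on e he
    have h4 := G.right_on f hf
    rw [← hef] at h2 h4
    obtain ⟨x, hx', hx⟩ := exists_between (max_lt h1 h2)
    obtain ⟨hx1, hx2⟩ := max_lt_iff.1 hx'
    refine G.noncrossing e he f hf hne x hx1 hx2 hx (by rw [← hef]; exact hx) ?_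
    rw [hm] at h3 ⊢
    linarith
  have hD : D.card ≤ V.card := by
    have : ∀ e : ι, ∃ w, e ∈ D → w ∈ V ∧ SeesAbove E l r m b w e := by
      intro e
      by_cases he : e ∈ D
      · obtain ⟨w, hw⟩ := (Finset.mem_filter.1 he).2
        exact ⟨w, fun _ => hw⟩
      · exact ⟨0, fun h => absurd h he⟩
    choose φ hφ using this
    refine Finset.card_le_card_of_injOn φ (fun e he => (hφ e he).1) ?_
    intro e he f hf hef
    refine SeesAbove.unique G (Finset.mem_filter.1 he).1 (Finset.mem_filter.1 hf).1
      (hφ e he).2 ?_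
    rw [hef]; exact (hφ f hf).2
  have hsub : E ⊆ A ∪ B ∪ D := by
    intro e he
    by_contra hn
    simp only [A, B, D, Finset.mem_union, Finset.mem_filter, not_or, he, true_and] at hn
    obtain ⟨⟨h1, h2⟩, h3⟩ := hn
    push Not at h1 h2
    obtain ⟨f, hf, hlf, hmf⟩ := h1
    obtain ⟨g, hg, hrg, hmg⟩ := h2
    exact h3 (G.exists_seesAbove he hf hg hlf hmf hrg hmg)
  calc E.card ≤ (A ∪ B ∪ D).card := Finset.card_le_card hsub
    _ ≤ A.card + B.card + D.card :=
      (Finset.card_union_le _ _).trans (by gcongr; exact Finset.card_union_le _ _)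
    _ ≤ 3 * V.card := by omega

end PlaneDrawing

/-! ### The crossing inequality by random sampling -/

/-- If each point of `P` is kept independently with probability `p`, then all points of `T` are
kept with probability `p ^ |T|`. -/
lemma sum_weight_superset {α : Type*} (P T : Finset α) (hT : T ⊆ P) (p : ℝ) :
    ∑ S ∈ P.powerset, p ^ S.card * (1 - p) ^ (P.card - S.card) * (if T ⊆ S then 1 else 0)
      = p ^ T.card := by
  have h := Finset.prod_add (fun _ : α => p) (fun i => if i ∈ T then 0 else 1 - p) P
  have h1 : ∏ i ∈ P, (p + if i ∈ T then 0 else 1 - p) = p ^ T.card := by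
    have : ∀ i ∈ P, (p + if i ∈ T then 0 else 1 - p) = if i ∈ T then p else 1 := by
      intro i _; split_ifs <;> ring
    rw [Finset.prod_congr rfl this, Finset.prod_ite]
    simp [Finset.filter_mem_eq_inter, Finset.inter_eq_right.2 hT]
  rw [← h1, h]
  refine Finset.sum_congr rfl fun S hS => ?_
  have hSP := Finset.mem_powerset.1 hS
  rw [Finset.prod_const, mul_assoc]
  congr 1
  split_ifs with hTS
  · rw [mul_one, ← Finset.card_sdiff_of_subset hSP, ← Finset.prod_const]
    refine Finset.prod_congr rfl fun i hi => ?_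
    rw [if_neg fun hiT => (Finset.mem_sdiff.1 hi).2 (hTS hiT)]
  · obtain ⟨i, hiT, hiS⟩ := Finset.not_subset.1 hTS
    rw [mul_zero]
    exact (Finset.prod_eq_zero (i := i)
      (Finset.mem_sdiff.2 ⟨hT hiT, hiS⟩) (by simp [hiT])).symm

/-- The expected number of members of a family of `k`-element sets which are kept entirely. -/
lemma sum_weight_card_filter {α β : Type*} (P : Finset α) (A : Finset β) (T : β → Finset α) (k : ℕ)
    (hT : ∀ a ∈ A, T a ⊆ P) (hk : ∀ a ∈ A, (T a).card = k) (p : ℝ) :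
    ∑ S ∈ P.powerset, p ^ S.card * (1 - p) ^ (P.card - S.card) *
      ((A.filter fun a => T a ⊆ S).card : ℝ) = A.card * p ^ k := by
  have : ∀ S : Finset α, ((A.filter fun a => T a ⊆ S).card : ℝ)
      = ∑ a ∈ A, if T a ⊆ S then 1 else 0 := by
    intro S; simp
  simp_rw [this, Finset.mul_sum]
  rw [Finset.sum_comm, Finset.sum_congr rfl fun a ha =>
    (sum_weight_superset P (T a) (hT a ha) p).trans (by rw [hk a ha])]
  simp

/-- Averaging the linear bound `|E(S)| ≤ 3 |S| + |X(S)|` over random `S ⊆ P` amplifies it, since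
edges survive with probability `p ^ 2` and crossings with probability `p ^ 4`. -/
lemma sampling_inequality {α β γ : Type*} (P : Finset α) (E : Finset β) (X : Finset γ)
    (T : β → Finset α) (U : γ → Finset α)
    (hT : ∀ e ∈ E, T e ⊆ P) (hT2 : ∀ e ∈ E, (T e).card = 2)
    (hU : ∀ x ∈ X, U x ⊆ P) (hU4 : ∀ x ∈ X, (U x).card = 4)
    (h : ∀ S ⊆ P, (E.filter fun e => T e ⊆ S).card ≤
      3 * S.card + (X.filter fun x => U x ⊆ S).card)
    (p : ℝ) (hp0 : 0 ≤ p) (hp1 : p ≤ 1) :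
    E.card * p ^ 2 ≤ 3 * (P.card * p) + X.card * p ^ 4 := by
  rw [← sum_weight_card_filter P E T 2 hT hT2, ← sum_weight_card_filter P X U 4 hU hU4]
  have hP := sum_weight_card_filter P P (fun v => {v}) 1 (by simp) (by simp) p
  rw [pow_one] at hP
  rw [← hP, Finset.mul_sum, ← Finset.sum_add_distrib]
  refine Finset.sum_le_sum fun S hS => ?_
  have hSP := Finset.mem_powerset.1 hS
  have hw : 0 ≤ p ^ S.card * (1 - p) ^ (P.card - S.card) :=
    mul_nonneg (pow_nonneg hp0 _) (pow_nonneg (sub_nonneg.2 hp1) _)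
  have hS' : (P.filter fun v => ({v} : Finset α) ⊆ S) = S := by
    ext v
    simp only [Finset.singleton_subset_iff, Finset.mem_filter, and_iff_right_iff_imp]
    exact fun hv => hSP hv
  rw [hS']
  have h' : ((E.filter fun e => T e ⊆ S).card : ℝ) ≤
      3 * S.card + (X.filter fun x => U x ⊆ S).card := by exact_mod_cast h S hSP
  nlinarith [mul_le_mul_of_nonneg_left h' hw]

/-- The crossing inequality in closed form: `e`, `n`, `k`, `c` are the numbers of edges, points,
lines and crossings. -/
lemma edge_bound {e n k c : ℝ} (hn : 0 ≤ n) (hk : 0 ≤ k) (hen : 0 < e → 0 < n) (hc : c ≤ k ^ 2)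
    (hs : ∀ p : ℝ, 0 ≤ p → p ≤ 1 → e * p ^ 2 ≤ 3 * (n * p) + c * p ^ 4) :
    e ≤ 5 * (n * k) ^ ((2 : ℝ) / 3) + 6 * n := by
  have hk0 : 0 ≤ n * k := mul_nonneg hn hk
  have ht0 : 0 ≤ (n * k) ^ ((2 : ℝ) / 3) := Real.rpow_nonneg hk0 _
  rcases le_or_gt e (6 * n) with h | h
  · linarith
  have he : 0 < e := by linarith
  have hn' : 0 < n := hen he
  -- This density makes the edge term twice the vertex term.
  have hs := hs (6 * n / e) (by positivity) ((div_le_one he).2 h.le)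
  have hcube : e ^ 3 ≤ 72 * (n * k) ^ 2 := by
    have h1 : e * (6 * n / e) ^ 2 * e ^ 4 ≤
        (3 * (n * (6 * n / e)) + k ^ 2 * (6 * n / e) ^ 4) * e ^ 4 := by
      gcongr
      exact hs.trans (by gcongr)
    have h2 : e * (6 * n / e) ^ 2 * e ^ 4 = 36 * n ^ 2 * e ^ 3 := by field_simp; ring
    have h3 : (3 * (n * (6 * n / e)) + k ^ 2 * (6 * n / e) ^ 4) * e ^ 4
        = 18 * n ^ 2 * e ^ 3 + 1296 * n ^ 4 * k ^ 2 := by field_simp; ring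
    rw [h2, h3] at h1
    have h4 : 18 * n ^ 2 * e ^ 3 ≤ 18 * n ^ 2 * (72 * (n * k) ^ 2) := by nlinarith
    exact le_of_mul_le_mul_left h4 (by positivity)
  have hrt : ((n * k) ^ ((2 : ℝ) / 3)) ^ 3 = (n * k) ^ 2 := by
    rw [← Real.rpow_natCast, ← Real.rpow_mul hk0, ← Real.rpow_natCast]
    norm_num
  have : e ≤ 5 * (n * k) ^ ((2 : ℝ) / 3) := by
    refine le_of_pow_le_pow_left₀ (n := 3) (by norm_num) (by positivity) ?_
    rw [mul_pow, hrt]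
    nlinarith [sq_nonneg (n * k)]
  linarith

/-! ### Non-vertical lines -/

set_option maxHeartbeats 1000000 in
/-- Here `(m, b) ∈ L` stands for the line `y = m x + b`. The graph on `P` joining consecutive
points of each line has at least `I - |L|` edges and at most `|L| ^ 2` (ordered) crossings. -/
theorem incidences_nonvertical (P L : Finset (ℝ × ℝ)) :
    (((P ×ˢ L).filter fun z => z.1.2 = z.2.1 * z.1.1 + z.2.2).card : ℝ) ≤
      5 * ((P.card : ℝ) * (L.card : ℝ)) ^ ((2 : ℝ) / 3) + 6 * (P.card : ℝ) + (L.card : ℝ) := by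
  set I := (P ×ˢ L).filter fun z => z.1.2 = z.2.1 * z.1.1 + z.2.2 with hI
  -- An edge is an incidence `(p, ℓ)` where `p` is not the last point of `P` on `ℓ`.
  set E := I.filter fun z => ∃ q ∈ P, q.2 = z.2.1 * q.1 + z.2.2 ∧ z.1.1 < q.1 with hE
  have hEI : (I.card : ℝ) ≤ E.card + L.card := by
    have h1 : (I \ E).card ≤ L.card := by
      refine Finset.card_le_card_of_injOn Prod.snd (fun z hz => ?_) ?_
      · have := (Finset.mem_sdiff.1 hz).1
        simp only [hI, Finset.mem_filter, Finset.mem_product] at this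
        exact this.1.2
      · have key : ∀ z ∈ I \ E, ∀ w ∈ I \ E, z.2 = w.2 → w.1.1 ≤ z.1.1 := by
          intro z hz w hw hzw
          by_contra! hlt
          obtain ⟨hz1, hz2⟩ := Finset.mem_sdiff.1 hz
          obtain ⟨hw1, -⟩ := Finset.mem_sdiff.1 hw
          simp only [hI, Finset.mem_filter, Finset.mem_product] at hw1
          exact hz2 (Finset.mem_filter.2 ⟨hz1, w.1, hw1.1.1, by rw [hzw]; exact hw1.2, hlt⟩)
        intro z hz w hw hzw
        have hx := le_antisymm (key w hw z hz hzw.symm) (key z hz w hw hzw)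
        have hz1 := (Finset.mem_filter.1 (Finset.mem_sdiff.1 hz).1).2
        have hw1 := (Finset.mem_filter.1 (Finset.mem_sdiff.1 hw).1).2
        exact Prod.ext (Prod.ext hx (by rw [hz1, hw1, hx, hzw])) hzw
    have hsub : E ⊆ I := Finset.filter_subset _ _
    have h2 := Finset.card_sdiff_add_card_eq_card hsub
    have h3 : I.card ≤ E.card + L.card := by omega
    exact_mod_cast h3
  have hnext : ∀ z : (ℝ × ℝ) × (ℝ × ℝ), ∃ q : ℝ × ℝ, z ∈ E → q ∈ P ∧
      q.2 = z.2.1 * q.1 + z.2.2 ∧ z.1.1 < q.1 ∧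
      ∀ q' ∈ P, q'.2 = z.2.1 * q'.1 + z.2.2 → z.1.1 < q'.1 → q.1 ≤ q'.1 := by
    intro z
    by_cases hz : z ∈ E
    · obtain ⟨q, hq1, hq2, hq3⟩ := (Finset.mem_filter.1 hz).2
      obtain ⟨q', hq', hmin⟩ := Finset.exists_min_image
        (P.filter fun q => q.2 = z.2.1 * q.1 + z.2.2 ∧ z.1.1 < q.1) Prod.fst
        ⟨q, Finset.mem_filter.2 ⟨hq1, hq2, hq3⟩⟩
      obtain ⟨a1, a2, a3⟩ := Finset.mem_filter.1 hq'
      exact ⟨q', fun _ => ⟨a1, a2, a3, fun s s1 s2 s3 =>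
        hmin s (Finset.mem_filter.2 ⟨s1, s2, s3⟩)⟩⟩
    · exact ⟨0, fun h => absurd h hz⟩
  choose r hr using hnext
  have hl : ∀ z ∈ E, z.1 ∈ P ∧ z.2 ∈ L ∧ z.1.2 = z.2.1 * z.1.1 + z.2.2 := by
    intro z hz
    have := (Finset.mem_filter.1 hz).1
    simp only [hI, Finset.mem_filter, Finset.mem_product] at this
    exact ⟨this.1.1, this.1.2, this.2⟩
  -- Edges of one line have disjoint interiors.
  have huniq : ∀ e ∈ E, ∀ f ∈ E, e.2 = f.2 → ∀ x, e.1.1 < x → f.1.1 < x → x < (r e).1 →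
      x < (r f).1 → e = f := by
    have key : ∀ e ∈ E, ∀ f ∈ E, e.2 = f.2 → ∀ x, f.1.1 < x → x < (r e).1 → f.1.1 ≤ e.1.1 := by
      intro e he f hf hef x h1 h2
      by_contra! hlt
      have := (hr e he).2.2.2 f.1 (hl f hf).1 (by rw [hef]; exact (hl f hf).2.2) hlt
      linarith
    intro e he f hf hef x h1 h2 h3 h4
    have hx := le_antisymm (key f hf e he hef.symm x h1 h4) (key e he f hf hef x h2 h3)
    exact Prod.ext (Prod.ext hx (by rw [(hl e he).2.2, (hl f hf).2.2, hx, hef])) hef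
  -- Two lines meeting over two different abscissas coincide.
  have hline : ∀ k k' : ℝ × ℝ, ∀ x y, x ≠ y → k.1 * x + k.2 = k'.1 * x + k'.2 →
      k.1 * y + k.2 = k'.1 * y + k'.2 → k = k' := by
    intro k k' x y hxy h1 h2
    have h3 : (k.1 - k'.1) * (x - y) = 0 := by linarith
    have h4 : k.1 = k'.1 := by
      rcases mul_eq_zero.1 h3 with h | h
      · linarith
      · exact absurd (by linarith) hxy
    exact Prod.ext h4 (by rw [h4] at h1; linarith)
  set X := (E ×ˢ E).filter fun c => c.1 ≠ c.2 ∧ ∃ x, c.1.1.1 < x ∧ c.2.1.1 < x ∧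
    x < (r c.1).1 ∧ x < (r c.2).1 ∧
    c.1.2.1 * x + c.1.2.2 = c.2.2.1 * x + c.2.2.2 with hX
  have hXspec : ∀ c ∈ X, c.1 ∈ E ∧ c.2 ∈ E ∧ c.1.2 ≠ c.2.2 ∧ ∃ x, c.1.1.1 < x ∧ c.2.1.1 < x ∧
      x < (r c.1).1 ∧ x < (r c.2).1 ∧ c.1.2.1 * x + c.1.2.2 = c.2.2.1 * x + c.2.2.2 := by
    intro c hc
    simp only [hX, Finset.mem_filter, Finset.mem_product] at hc
    obtain ⟨⟨h1, h2⟩, h3, x, a1, a2, a3, a4, a5⟩ := hc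
    exact ⟨h1, h2, fun h => h3 (huniq _ h1 _ h2 h x a1 a2 a3 a4), x, a1, a2, a3, a4, a5⟩
  have hXcard : X.card ≤ L.card ^ 2 := by
    rw [sq, ← Finset.card_product]
    refine Finset.card_le_card_of_injOn (fun c => (c.1.2, c.2.2)) (fun c hc => ?_) ?_
    · obtain ⟨h1, h2, -⟩ := hXspec c hc
      exact Finset.mem_product.2 ⟨(hl _ h1).2.1, (hl _ h2).2.1⟩
    · intro c hc d hd hcd
      obtain ⟨h1, h2, h3, x, a1, a2, a3, a4, a5⟩ := hXspec c hc
      obtain ⟨k1, k2, k3, y, b1, b2, b3, b4, b5⟩ := hXspec d hd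
      obtain ⟨e1, e2⟩ : c.1.2 = d.1.2 ∧ c.2.2 = d.2.2 := by simpa using hcd
      have hxy : x = y := by
        by_contra hne
        exact h3 (hline _ _ x y hne a5 (by rw [e1, e2]; exact b5))
      subst hxy
      exact Prod.ext (huniq _ h1 _ k1 e1 x a1 b1 a3 b3) (huniq _ h2 _ k2 e2 x a2 b2 a4 b4)
  have hsample : ∀ p : ℝ, 0 ≤ p → p ≤ 1 →
      E.card * p ^ 2 ≤ 3 * (P.card * p) + X.card * p ^ 4 := by
    refine sampling_inequality P E X (fun e => {e.1, r e})
      (fun c => {c.1.1, r c.1, c.2.1, r c.2}) ?_ ?_ ?_ ?_ ?_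
    · intro e he
      simp [Finset.insert_subset_iff, (hl e he).1, (hr e he).1]
    · intro e he
      refine Finset.card_pair fun h => ?_
      have := (hr e he).2.2.1
      rw [← h] at this
      exact lt_irrefl _ this
    · intro c hc
      obtain ⟨h1, h2, -⟩ := hXspec c hc
      simp [Finset.insert_subset_iff, (hl _ h1).1, (hr _ h1).1, (hl _ h2).1, (hr _ h2).1]
    · intro c hc
      obtain ⟨h1, h2, h3, x, a1, a2, a3, a4, a5⟩ := hXspec c hc
      -- A common endpoint would be a second common point of the two lines.
      have key : ∀ u v : ℝ × ℝ, u.2 = c.1.2.1 * u.1 + c.1.2.2 → v.2 = c.2.2.1 * v.1 + c.2.2.2 →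
          u.1 ≠ x → u ≠ v := by
        rintro u v hu hv hux rfl
        exact h3 (hline _ _ u.1 x hux (hu.symm.trans hv) a5)
      have n1 : c.1.1 ≠ r c.1 := fun h => by rw [h] at a1; linarith
      have n2 : c.2.1 ≠ r c.2 := fun h => by rw [h] at a2; linarith
      have n3 := key _ _ (hl _ h1).2.2 (hl _ h2).2.2 a1.ne
      have n4 := key _ _ (hl _ h1).2.2 (hr _ h2).2.1 a1.ne
      have n5 := key _ _ (hr _ h1).2.1 (hl _ h2).2.2 a3.ne'
      have n6 := key _ _ (hr _ h1).2.1 (hr _ h2).2.1 a3.ne'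
      rw [Finset.card_insert_of_notMem (by simp [n1, n3, n4]),
        Finset.card_insert_of_notMem (by simp [n5, n6]), Finset.card_pair n2]
    · intro S hS
      set ES := E.filter fun e => ({e.1, r e} : Finset (ℝ × ℝ)) ⊆ S with hES
      set XS := X.filter fun c => ({c.1.1, r c.1, c.2.1, r c.2} : Finset (ℝ × ℝ)) ⊆ S with hXS
      have hmem : ∀ e ∈ ES, e ∈ E ∧ e.1 ∈ S ∧ r e ∈ S := by
        intro e he
        simpa [hES, Finset.insert_subset_iff] using he
      -- Deleting the first edge of each crossing leaves a crossing-free drawing.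
      have hG : PlaneDrawing S (ES \ XS.image Prod.fst) Prod.fst r (fun e => e.2.1)
          (fun e => e.2.2) := by
        have hm : ∀ e ∈ ES \ XS.image Prod.fst, e ∈ E ∧ e.1 ∈ S ∧ r e ∈ S :=
          fun e he => hmem e (Finset.mem_sdiff.1 he).1
        refine ⟨fun e he => (hm e he).2.1, fun e he => (hm e he).2.2,
          fun e he => (hr e (hm e he).1).2.2.1, fun e he => (hl e (hm e he).1).2.2,
          fun e he => (hr e (hm e he).1).2.1, ?_, ?_⟩
        · intro e he w hw h1 h2 h3
          have := (hr e (hm e he).1).2.2.2 w (hS hw) h3 h1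
          linarith
        · intro e he f hf hne x a1 a2 a3 a4 a5
          obtain ⟨e1, e2, e3⟩ := hm e he
          obtain ⟨f1, f2, f3⟩ := hm f hf
          refine (Finset.mem_sdiff.1 he).2 (Finset.mem_image.2 ⟨(e, f), ?_, rfl⟩)
          refine Finset.mem_filter.2 ⟨Finset.mem_filter.2 ⟨Finset.mem_product.2 ⟨e1, f1⟩,
            hne, x, a1, a2, a3, a4, a5⟩, ?_⟩
          simp [Finset.insert_subset_iff, e2, e3, f2, f3]
      have h1 := hG.card_le
      have h2 := Finset.le_card_sdiff (XS.image Prod.fst) ES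
      have h3 : (XS.image Prod.fst).card ≤ XS.card := Finset.card_image_le
      have h4 : ES.card ≤ 3 * S.card + XS.card := by omega
      convert h4
  have hEb := edge_bound (Nat.cast_nonneg P.card) (Nat.cast_nonneg L.card)
    (fun h : (0 : ℝ) < E.card => by
      obtain ⟨e, he⟩ := Finset.card_pos.1 (Nat.cast_pos.1 h)
      exact Nat.cast_pos.2 (Finset.card_pos.2 ⟨e.1, (hl e he).1⟩))
    (by exact_mod_cast hXcard) hsample
  linarith

/-! ### Reduction to non-vertical lines -/

theorem szemeredi_trotter :
    ∃ c : ℝ, 0 < c ∧ ∀ (P : Finset (Fin 2 → ℝ)) (L : Finset (Set (Fin 2 → ℝ))),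
      (∀ l ∈ L, IsLineR l) →
      (incidencesR P L : ℝ) ≤
        c * (((P.card : ℝ) * (L.card : ℝ)) ^ ((2 : ℝ) / 3) + (P.card : ℝ) + (L.card : ℝ)) := by
  refine ⟨7, by norm_num, fun P L hL => ?_⟩
  -- A line is vertical, or the graph of an affine function `x ↦ k.1 * x + k.2`.
  have hform : ∀ l : Set (Fin 2 → ℝ), ∃ k : ℝ × ℝ, l ∈ L →
      (∃ a, l = {x | x 0 = a}) ∨ l = {x | x 1 = k.1 * x 0 + k.2} := by
    intro l
    by_cases hl : l ∈ L
    · obtain ⟨a, b, c, hab, rfl⟩ := hL l hl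
      by_cases hb : b = 0
      · have ha : a ≠ 0 := by simpa [hb] using hab
        refine ⟨0, fun _ => Or.inl ⟨-c / a, ?_⟩⟩
        ext x
        simp only [Set.mem_ofPred_eq, hb, eq_div_iff ha]
        constructor <;> intro h <;> linarith
      · refine ⟨(-a / b, -c / b), fun _ => Or.inr ?_⟩
        ext x
        simp only [Set.mem_ofPred_eq]
        have : -a / b * x 0 + -c / b = (-a * x 0 - c) / b := by field_simp; ring
        rw [this, eq_div_iff hb]
        constructor <;> intro h <;> linarith
    · exact ⟨0, fun h => absurd h hl⟩
  choose κ hκ using hform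
  set I := (P ×ˢ L).filter fun z => z.1 ∈ z.2 with hI
  have hImem : ∀ z ∈ I, z.1 ∈ P ∧ z.2 ∈ L ∧ z.1 ∈ z.2 := by
    intro z hz
    simpa [hI, and_assoc] using hz
  -- A point lies on at most one vertical line.
  have hvert : (I.filter fun z => ∃ a, z.2 = {x | x 0 = a}).card ≤ P.card := by
    refine Finset.card_le_card_of_injOn Prod.fst
      (fun z hz => (hImem z (Finset.mem_filter.1 hz).1).1) ?_
    intro z hz w hw hzw
    obtain ⟨hz1, a, ha⟩ := Finset.mem_filter.1 hz
    obtain ⟨hw1, a', ha'⟩ := Finset.mem_filter.1 hw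
    have h1 := (hImem z hz1).2.2
    have h2 := (hImem w hw1).2.2
    rw [ha, Set.mem_ofPred_eq] at h1
    rw [ha', Set.mem_ofPred_eq] at h2
    refine Prod.ext hzw ?_
    rw [ha, ha', ← h1, ← h2, hzw]
  set P' := P.image fun x => ((x 0, x 1) : ℝ × ℝ) with hP'
  set L' := L.image κ with hL'
  have hother : (I.filter fun z => ¬ ∃ a, z.2 = {x | x 0 = a}).card ≤
      ((P' ×ˢ L').filter fun z => z.1.2 = z.2.1 * z.1.1 + z.2.2).card := by
    have hgraph : ∀ z ∈ I.filter (fun z => ¬ ∃ a, z.2 = {x | x 0 = a}),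
        z ∈ I ∧ z.2 = {x | x 1 = (κ z.2).1 * x 0 + (κ z.2).2} := by
      intro z hz
      obtain ⟨hz1, hz2⟩ := Finset.mem_filter.1 hz
      exact ⟨hz1, (hκ z.2 (hImem z hz1).2.1).resolve_left hz2⟩
    refine Finset.card_le_card_of_injOn (fun z => ((z.1 0, z.1 1), κ z.2)) (fun z hz => ?_) ?_
    · obtain ⟨hz1, hz2⟩ := hgraph z hz
      obtain ⟨h1, h2, h3⟩ := hImem z hz1
      rw [hz2, Set.mem_ofPred_eq] at h3
      exact Finset.mem_filter.2 ⟨Finset.mem_product.2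
        ⟨Finset.mem_image_of_mem _ h1, Finset.mem_image_of_mem _ h2⟩, h3⟩
    · intro z hz w hw hzw
      obtain ⟨-, hz2⟩ := hgraph z hz
      obtain ⟨-, hw2⟩ := hgraph w hw
      simp only [Prod.mk.injEq] at hzw
      obtain ⟨⟨h0, h1⟩, h2⟩ := hzw
      refine Prod.ext (funext fun i => ?_) ?_
      · fin_cases i
        · exact h0
        · exact h1
      · rw [hz2, hw2, h2]
  have hsplit : incidencesR P L = (I.filter fun z => ∃ a, z.2 = {x | x 0 = a}).card +
      (I.filter fun z => ¬ ∃ a, z.2 = {x | x 0 = a}).card :=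
    (Finset.card_filter_add_card_filter_not _).symm
  have hmain := incidences_nonvertical P' L'
  have hPc : (P'.card : ℝ) ≤ P.card := by exact_mod_cast Finset.card_image_le
  have hLc : (L'.card : ℝ) ≤ L.card := by exact_mod_cast Finset.card_image_le
  have hpow : ((P'.card : ℝ) * (L'.card : ℝ)) ^ ((2 : ℝ) / 3) ≤
      ((P.card : ℝ) * (L.card : ℝ)) ^ ((2 : ℝ) / 3) := by gcongr
  have ht0 : 0 ≤ ((P.card : ℝ) * (L.card : ℝ)) ^ ((2 : ℝ) / 3) := by positivity
  have hL0 : (0 : ℝ) ≤ L.card := Nat.cast_nonneg _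
  have h1 : (incidencesR P L : ℝ) ≤ P.card +
      ((P' ×ˢ L').filter fun z => z.1.2 = z.2.1 * z.1.1 + z.2.2).card := by
    rw [hsplit]; exact_mod_cast Nat.add_le_add hvert hother
  linarith
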